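/- Fix a, b > 0, ε > 0, r₂ > r₁ > 0 and c₁, c₂ > 0. There exists a constant c > 0, depending only on r₁, r₂, c₁, c₂, a, b, ε, such that for every n, every matrix A satisfying condition (A), every H satisfying conditions (H1)–(H2), every region Ω with U_n(r₁n^ε) ⊆ Ω ⊆ U_n(r₂n^ε), and every index k: |⟨θ_k²⟩_{F,Ω} − (1/2)·⟨1⟩_{F,Ω}| ≤ c·n^{−1+4ε}·⟨1⟩ and |⟨θ_k⁴⟩_{F,Ω} − (3/4)·⟨1⟩_{F,Ω}| ≤ c·n^{−1+7ε}·⟨1⟩. -/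

import Mathlib

/-!
The proof is Stein's method on all of `ℝⁿ`, followed by moment bounds for the error terms.

Let `v = A⁻¹ e_k`. Along `v` the exponent `F` has derivative `-2 θ_k + ∂_v H`, so integrating
`∂_v (θ_k^(m+1) e^F)` over `ℝⁿ` gives (`stein`)
`(m + 1) v_k ⟨θ_k^m⟩ = 2 ⟨θ_k^(m+2)⟩ - ⟨θ_k^(m+1) ∂_v H⟩`.
Condition (A) yields `v_k = 1 + O(1/n)` and `‖v‖₁ = O(1)` (`exists_column`), and (H2) then bounds
`∂_v H` by `O((‖θ‖³ + ‖θ‖) / n)`. Taking `m = 0` and `m = 2` gives the two estimates for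
`Ω = ℝⁿ` (`moments_full`), once `⟨‖θ‖^(2q)⟩_F = O(n^(2qε)) ⟨1⟩` is known.

These moments come from Stein's identity again: with `H = 0` it bounds all even moments of a single
coordinate (`gaussian_moment`), (H1) compares `e^F` with a slightly rescaled Gaussian
(`gibbs_moment`), and the maximum norm is controlled by summing over the coordinates. The factor `n`
lost in that sum is absorbed by Markov's inequality for a moment of order at least `2 / ε`
(`gibbs_tail`), which also shows that passing from `ℝⁿ` to `Ω` costs only `O(1/n)`
(`moment_restrict`); no regularity of `Ω` is used.

All this requires `n ≥ 2 c₁`. For smaller `n`, every quantity is bounded on `Ω` in terms of the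
parameters (`moments_small`).
-/

open MeasureTheory Matrix Finset

/-- The ℓ^p norm on `Fin n → ℝ` (with `p = ⊤` the maximum norm). -/
noncomputable def lpnorm {n : ℕ} (p : ENNReal) (x : Fin n → ℝ) : ℝ :=
  if p = ⊤ then ⨆ j, |x j| else (∑ j, |x j| ^ p.toReal) ^ (1 / p.toReal)

/-- The operator norm induced by the ℓ^p vector norm. -/
noncomputable def opNorm {n : ℕ} (p : ENNReal) (A : Matrix (Fin n) (Fin n) ℝ) : ℝ :=
  sSup {c : ℝ | ∃ x : Fin n → ℝ, x ≠ 0 ∧ c = lpnorm p (A.mulVec x) / lpnorm p x}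

/-- Condition (A): `A = I + X` is symmetric positive definite, `X` has zero diagonal,
`|X_{jk}| ≤ a/n` for all `j,k`, and `‖A⁻¹‖₂ ≤ b`. -/
def CondA {n : ℕ} (a b : ℝ) (A : Matrix (Fin n) (Fin n) ℝ) : Prop :=
  A.IsSymm ∧ A.PosDef ∧ (∀ j, A j j = 1) ∧
    (∀ j k, j ≠ k → |A j k| ≤ a / n) ∧ opNorm 2 A⁻¹ ≤ b

/-- The cube `U_n(ρ) = {θ ∈ ℝⁿ : |θ_j| ≤ ρ for all j}`. -/
def Uset (n : ℕ) (ρ : ℝ) : Set (Fin n → ℝ) := {θ | ∀ j, |θ j| ≤ ρ}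

/-- Conditions (H1)–(H2): `H` is C¹ with `H(θ) ≤ c₁ θᵀAθ/n` and
`‖∇H(θ)‖_∞ ≤ c₂ (‖θ‖_∞³ + ‖θ‖_∞)/n`.  (The norm `‖θ‖` on `Fin n → ℝ` is the sup norm.) -/
def CondH {n : ℕ} (c₁ c₂ : ℝ) (A : Matrix (Fin n) (Fin n) ℝ) (H : (Fin n → ℝ) → ℝ) : Prop :=
  ContDiff ℝ 1 H ∧
    (∀ θ, H θ ≤ c₁ * (θ ⬝ᵥ A.mulVec θ) / n) ∧
    (∀ θ (j : Fin n), |fderiv ℝ H θ (Pi.single j 1)| ≤ c₂ * (‖θ‖ ^ 3 + ‖θ‖) / n)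

/-! ### The inverse matrix -/

theorem lpnorm_two {n : ℕ} (x : Fin n → ℝ) : lpnorm 2 x = Real.sqrt (∑ j, x j ^ 2) := by
  simp [lpnorm, Real.sqrt_eq_rpow]

theorem mulVec_sq_le_sum_sq {n : ℕ} (M : Matrix (Fin n) (Fin n) ℝ) (x : Fin n → ℝ) :
    ∑ i, (M *ᵥ x) i ^ 2 ≤ (∑ i, ∑ j, M i j ^ 2) * ∑ j, x j ^ 2 := by
  rw [Finset.sum_mul]
  exact Finset.sum_le_sum fun i _ => Finset.sum_mul_sq_le_sq_mul_sq Finset.univ (M i) x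

/-- The supremum defining `opNorm 2 M` is over a bounded set, so it is an honest operator norm. -/
theorem mulVec_sq_le_of_opNorm_le {n : ℕ} {b : ℝ} (M : Matrix (Fin n) (Fin n) ℝ)
    (h : opNorm 2 M ≤ b) (x : Fin n → ℝ) :
    ∑ i, (M *ᵥ x) i ^ 2 ≤ b ^ 2 * ∑ j, x j ^ 2 := by
  rcases eq_or_ne x 0 with rfl | hx
  · simp
  have hpos : ∀ y : Fin n → ℝ, y ≠ 0 → 0 < ∑ j, y j ^ 2 := by
    intro y hy
    obtain ⟨i, hi⟩ := Function.ne_iff.1 hy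
    exact Finset.sum_pos' (fun _ _ => sq_nonneg _) ⟨i, Finset.mem_univ _, sq_pos_of_ne_zero hi⟩
  have hbdd : BddAbove {c : ℝ | ∃ x : Fin n → ℝ, x ≠ 0 ∧
      c = lpnorm 2 (M.mulVec x) / lpnorm 2 x} := by
    refine ⟨Real.sqrt (∑ i, ∑ j, M i j ^ 2), ?_⟩
    rintro c ⟨y, hy, rfl⟩
    rw [lpnorm_two, lpnorm_two, div_le_iff₀ (Real.sqrt_pos.2 (hpos y hy)),
      ← Real.sqrt_mul (by positivity)]
    exact Real.sqrt_le_sqrt (mulVec_sq_le_sum_sq M y)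
  have h1 : lpnorm 2 (M.mulVec x) / lpnorm 2 x ≤ b := (le_csSup hbdd ⟨x, hx, rfl⟩).trans h
  rw [lpnorm_two, lpnorm_two, div_le_iff₀ (Real.sqrt_pos.2 (hpos x hx))] at h1
  have h2 := pow_le_pow_left₀ (Real.sqrt_nonneg _) h1 2
  rwa [mul_pow, Real.sq_sqrt (by positivity), Real.sq_sqrt (by positivity)] at h2

/-- The `k`-th column `v` of `A⁻¹` is `e_k` up to `O(1/n)` in the `k`-th entry, and its `ℓ¹` norm is
bounded uniformly in `n`.  With `u = e_k - A e_k` one has `v - e_k = A⁻¹ u` and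
`v_k - 1 = ⟨v - e_k, u⟩`. -/
theorem exists_column {n : ℕ} {a b : ℝ} (ha : 0 < a) (hb : 0 < b)
    (A : Matrix (Fin n) (Fin n) ℝ) (hA : CondA a b A) (k : Fin n) :
    ∃ v : Fin n → ℝ, A *ᵥ v = Pi.single k 1 ∧ ∑ j, |v j| ≤ 1 + a * b ∧
      |v k - 1| ≤ a ^ 2 * b / n := by
  obtain ⟨hsymm, hpd, hdiag, hoff, hop⟩ := hA
  have hn : (0 : ℝ) < n := by exact_mod_cast (Fin.pos k)
  have hdet : IsUnit A.det := (Matrix.isUnit_iff_isUnit_det A).1 hpd.isUnit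
  set e : Fin n → ℝ := Pi.single k 1 with he
  set u : Fin n → ℝ := e - A *ᵥ e with hu
  have hAe : ∀ j, (A *ᵥ e) j = A j k := by intro j; simp [he]
  have huk : u k = 0 := by simp [hu, he, hdiag]
  have huj : ∀ j, |u j| ≤ a / n := by
    intro j
    by_cases hj : j = k
    · subst hj; rw [huk]; simp; positivity
    · have : u j = - A j k := by simp [hu, he, hj]
      rw [this, abs_neg]; exact hoff j k hj
  set w : Fin n → ℝ := A⁻¹ *ᵥ u with hw
  have hAw : A *ᵥ w = u := by
    rw [hw, Matrix.mulVec_mulVec, Matrix.mul_nonsing_inv _ hdet, Matrix.one_mulVec]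
  have hv : A *ᵥ (e + w) = e := by
    rw [Matrix.mulVec_add, hAw, hu]; abel
  have hu2 : ∑ j, u j ^ 2 ≤ a ^ 2 / n := by
    calc ∑ j, u j ^ 2 ≤ ∑ _j : Fin n, (a / n) ^ 2 := Finset.sum_le_sum fun j _ => by
          rw [← sq_abs]; exact pow_le_pow_left₀ (abs_nonneg _) (huj j) 2
      _ = a ^ 2 / n := by simp; field_simp
  have hw2 : ∑ j, w j ^ 2 ≤ b ^ 2 * (a ^ 2 / n) :=
    (mulVec_sq_le_of_opNorm_le _ hop u).trans (by gcongr)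
  have hw1 : ∑ j, |w j| ≤ a * b := by
    have h1 : (∑ j, |w j|) ^ 2 ≤ (a * b) ^ 2 := by
      refine (sq_sum_le_card_mul_sum_sq).trans ?_
      simp only [sq_abs, Finset.card_univ, Fintype.card_fin]
      calc (n : ℝ) * ∑ j, w j ^ 2 ≤ n * (b ^ 2 * (a ^ 2 / n)) := by gcongr
        _ = (a * b) ^ 2 := by field_simp
    exact le_of_sq_le_sq h1 (by positivity)
  have hdot : w k = ∑ j, w j * u j := by
    have h1 : e ⬝ᵥ (A *ᵥ w) = w k - w ⬝ᵥ u := by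
      rw [Matrix.dotProduct_mulVec, ← Matrix.mulVec_transpose, hsymm.eq,
        show A *ᵥ e = e - u by rw [hu]; abel, sub_dotProduct, dotProduct_comm u w]
      simp [he]
    have h2 : e ⬝ᵥ (A *ᵥ w) = 0 := by rw [hAw]; simp [he, huk]
    rw [h2] at h1
    have : w ⬝ᵥ u = ∑ j, w j * u j := rfl
    linarith
  refine ⟨e + w, hv, ?_, ?_⟩
  · calc ∑ j, |(e + w) j| ≤ ∑ j, (|e j| + |w j|) :=
          Finset.sum_le_sum fun j _ => abs_add_le _ _
      _ = 1 + ∑ j, |w j| := by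
          rw [Finset.sum_add_distrib]; congr 1
          rw [Finset.sum_eq_single k] <;> simp +contextual [he]
      _ ≤ _ := by gcongr
  · have : (e + w) k - 1 = w k := by simp [he]
    rw [this, hdot]
    calc |∑ j, w j * u j| ≤ ∑ j, |w j * u j| := Finset.abs_sum_le_sum_abs _ _
      _ ≤ ∑ j, |w j| * (a / n) := Finset.sum_le_sum fun j _ => by
          rw [abs_mul]; gcongr; exact huj j
      _ = (∑ j, |w j|) * (a / n) := by rw [Finset.sum_mul]
      _ ≤ (a * b) * (a / n) := by gcongr
      _ = _ := by ring

/-! ### Integrability -/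

/-- The density `e^{F(θ)}` with `F(θ) = -θᵀAθ + H(θ)`. -/
noncomputable def gibbs {n : ℕ} (A : Matrix (Fin n) (Fin n) ℝ) (H : (Fin n → ℝ) → ℝ)
    (θ : Fin n → ℝ) : ℝ := Real.exp (-(θ ⬝ᵥ A.mulVec θ) + H θ)

/-- A `C¹` perturbation that leaves at least half of the Gaussian decay and whose gradient grows at
most cubically.  Conditions (H1)–(H2) give this with `D = c₂ / n` once `n ≥ 2 c₁`, and so does
`H = 0` with `D = 0`. -/
def Tame {n : ℕ} (A : Matrix (Fin n) (Fin n) ℝ) (D : ℝ) (H : (Fin n → ℝ) → ℝ) : Prop :=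
  ContDiff ℝ 1 H ∧ (∀ θ, H θ ≤ (1 / 2) * (θ ⬝ᵥ A.mulVec θ)) ∧
    ∀ θ (j : Fin n), |fderiv ℝ H θ (Pi.single j 1)| ≤ D * (‖θ‖ ^ 3 + ‖θ‖)

theorem gibbs_nonneg {n : ℕ} (A : Matrix (Fin n) (Fin n) ℝ) (H : (Fin n → ℝ) → ℝ)
    (θ : Fin n → ℝ) : 0 ≤ gibbs A H θ := (Real.exp_pos _).le

theorem continuous_quad {n : ℕ} (A : Matrix (Fin n) (Fin n) ℝ) :
    Continuous fun θ : Fin n → ℝ => θ ⬝ᵥ A.mulVec θ := by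
  simp only [dotProduct, Matrix.mulVec]; fun_prop

theorem continuous_gibbs {n : ℕ} {A : Matrix (Fin n) (Fin n) ℝ} {H : (Fin n → ℝ) → ℝ}
    (hH : Continuous H) : Continuous (gibbs A H) :=
  Real.continuous_exp.comp ((continuous_quad A).neg.add hH)

theorem tame_zero {n : ℕ} {A : Matrix (Fin n) (Fin n) ℝ} (hA : A.PosDef) : Tame A 0 fun _ => 0 := by
  refine ⟨contDiff_const, fun θ => ?_, fun θ j => by simp⟩
  have := hA.posSemidef.dotProduct_mulVec_nonneg θ
  simp only [star_trivial] at this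
  positivity

theorem exists_coercive {n : ℕ} {A : Matrix (Fin n) (Fin n) ℝ} (hA : A.PosDef) :
    ∃ δ : ℝ, 0 < δ ∧ ∀ θ : Fin n → ℝ, δ * ‖θ‖ ^ 2 ≤ θ ⬝ᵥ A.mulVec θ := by
  rcases (Metric.sphere (0 : Fin n → ℝ) 1).eq_empty_or_nonempty with h | h
  · refine ⟨1, one_pos, fun θ => ?_⟩
    have : θ = 0 := by
      by_contra hθ
      have : (‖θ‖⁻¹ • θ) ∈ Metric.sphere (0 : Fin n → ℝ) 1 := by
        simp [norm_smul, norm_ne_zero_iff.2 hθ]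
      rw [h] at this; exact this
    subst this; simp
  · obtain ⟨x, hx, hmin⟩ := (isCompact_sphere (0 : Fin n → ℝ) 1).exists_isMinOn h
      (continuous_quad A).continuousOn
    have hx0 : x ≠ 0 := by rintro rfl; simp at hx
    refine ⟨x ⬝ᵥ A.mulVec x, by simpa using hA.dotProduct_mulVec_pos hx0, fun θ => ?_⟩
    rcases eq_or_ne θ 0 with rfl | hθ
    · simp
    have hm : (‖θ‖⁻¹ • θ) ∈ Metric.sphere (0 : Fin n → ℝ) 1 := by
      simp [norm_smul, norm_ne_zero_iff.2 hθ]
    have h1 : x ⬝ᵥ A.mulVec x ≤ (‖θ‖⁻¹ • θ) ⬝ᵥ A.mulVec (‖θ‖⁻¹ • θ) := hmin hm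
    rw [Matrix.mulVec_smul, smul_dotProduct, dotProduct_smul, smul_eq_mul, smul_eq_mul] at h1
    have hpos : 0 < ‖θ‖ := norm_pos_iff.2 hθ
    calc x ⬝ᵥ A.mulVec x * ‖θ‖ ^ 2 ≤ ‖θ‖⁻¹ * (‖θ‖⁻¹ * θ ⬝ᵥ A.mulVec θ) * ‖θ‖ ^ 2 := by gcongr
      _ = _ := by field_simp

theorem integrable_exp_neg_mul_norm_sq (n : ℕ) {δ : ℝ} (hδ : 0 < δ) :
    Integrable fun θ : Fin n → ℝ => Real.exp (-δ * ‖θ‖ ^ 2) := by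
  rcases Nat.eq_zero_or_pos n with rfl | hn
  · have : (fun θ : Fin 0 → ℝ => Real.exp (-δ * ‖θ‖ ^ 2)) = fun _ => 1 := by
      funext θ; simp [Subsingleton.elim θ 0]
    rw [this]; simp
  have hn' : (0 : ℝ) < n := by exact_mod_cast hn
  have h := Integrable.fintype_prod (ι := Fin n) (𝕜 := ℝ) (μ := fun _ => (volume : Measure ℝ))
    (f := fun _ x => Real.exp (-(δ / n) * x ^ 2))
    (fun _ => integrable_exp_neg_mul_sq (by positivity))
  refine Integrable.mono' (μ := volume) h (by fun_prop) (Filter.Eventually.of_forall fun θ => ?_)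
  rw [Real.norm_eq_abs, Real.abs_exp, ← Real.exp_sum]
  apply Real.exp_le_exp.2
  rw [← Finset.mul_sum]
  have : ∑ i, θ i ^ 2 ≤ n * ‖θ‖ ^ 2 := by
    calc ∑ i, θ i ^ 2 ≤ ∑ _i : Fin n, ‖θ‖ ^ 2 := Finset.sum_le_sum fun i _ => by
          rw [← sq_abs]; exact pow_le_pow_left₀ (abs_nonneg _) (norm_le_pi_norm θ i) 2
      _ = _ := by simp
  have h2 : δ / n * ∑ i, θ i ^ 2 ≤ δ / n * (n * ‖θ‖ ^ 2) := by gcongr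
  have h3 : δ / n * (n * ‖θ‖ ^ 2) = δ * ‖θ‖ ^ 2 := by field_simp
  linarith

/-- Everything of polynomial growth is integrable against `e^F`. -/
theorem integrable_mul_gibbs {n : ℕ} {A : Matrix (Fin n) (Fin n) ℝ} {D : ℝ}
    {H : (Fin n → ℝ) → ℝ} (hA : A.PosDef) (hH : Tame A D H) {f : (Fin n → ℝ) → ℝ}
    (hf : Continuous f) {C : ℝ} {m : ℕ} (hC : 0 ≤ C) (hfb : ∀ θ, |f θ| ≤ C * (1 + ‖θ‖) ^ m) :
    Integrable fun θ => f θ * gibbs A H θ := by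
  obtain ⟨δ, hδ, hco⟩ := exists_coercive hA
  have h0 := (integrable_exp_neg_mul_norm_sq n (δ := δ / 4) (by positivity)).const_mul
    (C * (m.factorial * Real.exp (1 + 1 / δ)))
  refine h0.mono' (hf.mul (continuous_gibbs hH.1.continuous)).aestronglyMeasurable
    (Filter.Eventually.of_forall fun θ => ?_)
  rw [norm_mul, Real.norm_eq_abs, Real.norm_eq_abs, abs_of_nonneg (gibbs_nonneg A H θ)]
  have h1 : (1 + ‖θ‖) ^ m ≤ m.factorial * Real.exp (1 + ‖θ‖) := by
    have := Real.pow_div_factorial_le_exp (1 + ‖θ‖) (by positivity) m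
    rwa [div_le_iff₀' (by positivity)] at this
  have h2 : gibbs A H θ ≤ Real.exp (-(δ / 2) * ‖θ‖ ^ 2) := by
    apply Real.exp_le_exp.2
    have := hco θ
    have := hH.2.1 θ
    linarith
  have h3 : Real.exp (1 + ‖θ‖) * Real.exp (-(δ / 2) * ‖θ‖ ^ 2) ≤
      Real.exp (1 + 1 / δ) * Real.exp (-(δ / 4) * ‖θ‖ ^ 2) := by
    rw [← Real.exp_add, ← Real.exp_add]
    apply Real.exp_le_exp.2
    -- completing the square: `t ≤ δ t² / 4 + 1 / δ`
    have h4 : 0 ≤ (δ * ‖θ‖ / 2 - 1) ^ 2 / δ := by positivity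
    have h5 : (δ * ‖θ‖ / 2 - 1) ^ 2 / δ = δ / 4 * ‖θ‖ ^ 2 - ‖θ‖ + 1 / δ := by
      field_simp; ring
    linarith
  calc |f θ| * gibbs A H θ ≤ (C * (m.factorial * Real.exp (1 + ‖θ‖))) *
        Real.exp (-(δ / 2) * ‖θ‖ ^ 2) := by
        refine mul_le_mul ((hfb θ).trans (by gcongr)) h2 (gibbs_nonneg _ _ _) (by positivity)
    _ = C * m.factorial * (Real.exp (1 + ‖θ‖) * Real.exp (-(δ / 2) * ‖θ‖ ^ 2)) := by ring
    _ ≤ C * m.factorial * (Real.exp (1 + 1 / δ) * Real.exp (-(δ / 4) * ‖θ‖ ^ 2)) := by gcongr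
    _ = _ := by ring

theorem integrable_coord_pow {n : ℕ} {A : Matrix (Fin n) (Fin n) ℝ} {D : ℝ}
    {H : (Fin n → ℝ) → ℝ} (hA : A.PosDef) (hH : Tame A D H) (k : Fin n) (m : ℕ) :
    Integrable fun θ => θ k ^ m * gibbs A H θ := by
  refine integrable_mul_gibbs hA hH (by fun_prop) (C := 1) (m := m) zero_le_one fun θ => ?_
  rw [abs_pow, one_mul]
  have := norm_le_pi_norm θ k
  rw [Real.norm_eq_abs] at this
  exact pow_le_pow_left₀ (abs_nonneg _) (by linarith) m

theorem integrable_norm_pow {n : ℕ} {A : Matrix (Fin n) (Fin n) ℝ} {D : ℝ}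
    {H : (Fin n → ℝ) → ℝ} (hA : A.PosDef) (hH : Tame A D H) (m : ℕ) :
    Integrable fun θ => ‖θ‖ ^ m * gibbs A H θ := by
  refine integrable_mul_gibbs hA hH (by fun_prop) (C := 1) (m := m) zero_le_one fun θ => ?_
  rw [abs_pow, one_mul, abs_norm]
  exact pow_le_pow_left₀ (norm_nonneg _) (by linarith) m

theorem integrable_gibbs {n : ℕ} {A : Matrix (Fin n) (Fin n) ℝ} {D : ℝ}
    {H : (Fin n → ℝ) → ℝ} (hA : A.PosDef) (hH : Tame A D H) : Integrable (gibbs A H) := by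
  simpa using integrable_norm_pow hA hH 0

/-! ### Stein's identity -/

theorem abs_fderiv_le {n : ℕ} {A : Matrix (Fin n) (Fin n) ℝ} {D : ℝ}
    {H : (Fin n → ℝ) → ℝ} (hH : Tame A D H) (θ v : Fin n → ℝ) :
    |fderiv ℝ H θ v| ≤ (∑ j, |v j|) * (D * (‖θ‖ ^ 3 + ‖θ‖)) := by
  have h : fderiv ℝ H θ v = ∑ j, v j * fderiv ℝ H θ (Pi.single j 1) := by
    conv_lhs => rw [pi_eq_sum_univ' v]
    simp [map_sum]
  rw [h, Finset.sum_mul]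
  refine (Finset.abs_sum_le_sum_abs _ _).trans (Finset.sum_le_sum fun j _ => ?_)
  rw [abs_mul]
  exact mul_le_mul_of_nonneg_left (hH.2.2 θ j) (abs_nonneg _)

theorem hasLineDerivAt_gibbs {n : ℕ} {A : Matrix (Fin n) (Fin n) ℝ} {H : (Fin n → ℝ) → ℝ}
    (hsymm : A.IsSymm) (hH : ContDiff ℝ 1 H) {v : Fin n → ℝ} {k : Fin n}
    (hv : A *ᵥ v = Pi.single k 1) (θ : Fin n → ℝ) :
    HasLineDerivAt ℝ (gibbs A H) ((-2 * θ k + fderiv ℝ H θ v) * gibbs A H θ) θ v := by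
  have hHd : HasDerivAt (fun t : ℝ => H (θ + t • v)) (fderiv ℝ H θ v) 0 :=
    ((hH.differentiable (by norm_num)) θ).hasFDerivAt.hasLineDerivAt v
  have hq : ∀ t : ℝ, (θ + t • v) ⬝ᵥ A.mulVec (θ + t • v) =
      θ ⬝ᵥ A.mulVec θ + t * (2 * θ k) + t ^ 2 * v k := by
    intro t
    have h1 : v ⬝ᵥ A *ᵥ θ = θ k := by
      rw [Matrix.dotProduct_mulVec, ← Matrix.mulVec_transpose, hsymm.eq, hv]; simp
    simp only [Matrix.mulVec_add, Matrix.mulVec_smul, add_dotProduct, dotProduct_add,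
      smul_dotProduct, dotProduct_smul, hv, h1, smul_eq_mul]
    simp; ring
  have hqd : HasDerivAt (fun t : ℝ => (θ + t • v) ⬝ᵥ A.mulVec (θ + t • v)) (2 * θ k) 0 := by
    simp_rw [hq]
    exact ((((hasDerivAt_id' (0 : ℝ)).mul_const (2 * θ k)).const_add (θ ⬝ᵥ A.mulVec θ)).add
      (((hasDerivAt_id' (0 : ℝ)).pow 2).mul_const (v k))).congr_deriv (by simp)
  refine (hqd.neg.add hHd).exp.congr_deriv ?_
  simp only [Pi.add_apply, Pi.neg_apply, zero_smul, add_zero, gibbs]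
  ring

/-- Stein's identity: integration by parts of `θ_k^(m+1) e^F` along the direction `v = A⁻¹ e_k`, in
which the quadratic part of `F` has derivative `-2 θ_k`. -/
theorem stein {n : ℕ} {A : Matrix (Fin n) (Fin n) ℝ} {D : ℝ} {H : (Fin n → ℝ) → ℝ}
    (hsymm : A.IsSymm) (hA : A.PosDef) (hH : Tame A D H) (hD : 0 ≤ D) {v : Fin n → ℝ} {k : Fin n}
    (hv : A *ᵥ v = Pi.single k 1) (m : ℕ) :
    (m + 1) * v k * (∫ θ, θ k ^ m * gibbs A H θ) = 2 * (∫ θ, θ k ^ (m + 2) * gibbs A H θ) -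
      ∫ θ, θ k ^ (m + 1) * fderiv ℝ H θ v * gibbs A H θ := by
  have hcont : Continuous fun θ => fderiv ℝ H θ v :=
    (hH.1.continuous_fderiv (by norm_num)).clm_apply continuous_const
  have hint : Integrable fun θ => θ k ^ (m + 1) * fderiv ℝ H θ v * gibbs A H θ := by
    refine integrable_mul_gibbs hA hH (by fun_prop) (C := (∑ j, |v j|) * (D * 2)) (m := m + 4)
      (by positivity) fun θ => ?_
    have h1 : |θ k| ≤ 1 + ‖θ‖ := by
      have := norm_le_pi_norm θ k
      rw [Real.norm_eq_abs] at this; linarith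
    have h2 : ‖θ‖ ^ 3 + ‖θ‖ ≤ 2 * (1 + ‖θ‖) ^ 3 := by
      nlinarith [norm_nonneg θ, pow_nonneg (norm_nonneg θ) 2, pow_nonneg (norm_nonneg θ) 3]
    rw [abs_mul, abs_pow]
    calc |θ k| ^ (m + 1) * |fderiv ℝ H θ v| ≤
          (1 + ‖θ‖) ^ (m + 1) * ((∑ j, |v j|) * (D * (2 * (1 + ‖θ‖) ^ 3))) := by
          gcongr
          exact (abs_fderiv_le hH θ v).trans (by gcongr)
      _ = _ := by ring
  have hI := fun m => integrable_coord_pow hA hH k m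
  have hline : ∀ θ : Fin n → ℝ,
      HasLineDerivAt ℝ (fun θ : Fin n → ℝ => θ k ^ (m + 1)) ((m + 1) * θ k ^ m * v k) θ v := by
    intro θ
    have h1 : HasDerivAt (fun t : ℝ => θ k + t * v k) (v k) 0 := by
      simpa using ((hasDerivAt_id (0 : ℝ)).mul_const (v k)).const_add (θ k)
    exact (h1.pow (m + 1)).congr_deriv (by simp)
  have hparts := integral_bilinear_hasLineDerivAt_right_eq_neg_left_of_integrable
    (μ := (volume : Measure (Fin n → ℝ))) (B := ContinuousLinearMap.mul ℝ ℝ)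
    (f := fun θ : Fin n → ℝ => θ k ^ (m + 1)) (f' := fun θ => (m + 1) * θ k ^ m * v k)
    (g := gibbs A H) (g' := fun θ => (-2 * θ k + fderiv ℝ H θ v) * gibbs A H θ) (v := v)
    ?_ ?_ ?_ (fun θ _ => hline θ) (fun θ _ => hasLineDerivAt_gibbs hsymm hH.1 hv θ)
  · simp only [ContinuousLinearMap.mul_apply'] at hparts
    have e1 : ∫ θ, θ k ^ (m + 1) * ((-2 * θ k + fderiv ℝ H θ v) * gibbs A H θ) =
        (-2) * (∫ θ, θ k ^ (m + 2) * gibbs A H θ) +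
          ∫ θ, θ k ^ (m + 1) * fderiv ℝ H θ v * gibbs A H θ := by
      rw [← integral_const_mul, ← integral_add ((hI (m + 2)).const_mul _) hint]
      congr 1; funext θ; ring
    have e2 : ∫ θ, (m + 1) * θ k ^ m * v k * gibbs A H θ =
        (m + 1) * v k * ∫ θ, θ k ^ m * gibbs A H θ := by
      rw [← integral_const_mul]
      congr 1; funext θ; ring
    rw [e1, e2] at hparts
    linarith
  · simp only [ContinuousLinearMap.mul_apply']
    exact ((hI m).const_mul ((m + 1) * v k)).congr (ae_of_all _ fun θ => by ring)
  · simp only [ContinuousLinearMap.mul_apply']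
    exact (((hI (m + 2)).const_mul (-2)).add hint).congr
      (ae_of_all _ fun θ => by simp only [Pi.add_apply]; ring)
  · simpa only [ContinuousLinearMap.mul_apply'] using hI (m + 1)

/-! ### Moment bounds -/

theorem quad_nonneg {n : ℕ} {A : Matrix (Fin n) (Fin n) ℝ} (hA : A.PosDef) (θ : Fin n → ℝ) :
    0 ≤ θ ⬝ᵥ A.mulVec θ := by
  simpa using hA.posSemidef.dotProduct_mulVec_nonneg θ

theorem CondH.tame {n : ℕ} {A : Matrix (Fin n) (Fin n) ℝ} {c₁ c₂ : ℝ} {H : (Fin n → ℝ) → ℝ}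
    (hA : A.PosDef) (hH : CondH c₁ c₂ A H) (hn : 0 < n) (hn1 : 2 * c₁ ≤ n) :
    Tame A (c₂ / n) H := by
  have hn' : (0 : ℝ) < n := by exact_mod_cast hn
  refine ⟨hH.1, fun θ => (hH.2.1 θ).trans ?_, fun θ j => (hH.2.2 θ j).trans_eq (by ring)⟩
  rw [div_le_iff₀ hn']
  nlinarith [quad_nonneg hA θ]

/-- Even moments of the Gaussian, by iterating Stein's identity with `H = 0`. -/
theorem gaussian_moment {a b : ℝ} (ha : 0 < a) (hb : 0 < b) (q : ℕ) :
    ∃ C : ℝ, 0 ≤ C ∧ ∀ (n : ℕ) (A : Matrix (Fin n) (Fin n) ℝ), CondA a b A → ∀ k : Fin n,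
      ∫ θ, θ k ^ (2 * q) * gibbs A (fun _ => 0) θ ≤ C * ∫ θ, gibbs A (fun _ => 0) θ := by
  induction q with
  | zero => exact ⟨1, zero_le_one, fun n A _ k => by simp⟩
  | succ q ih =>
    obtain ⟨C, hC, h⟩ := ih
    refine ⟨(2 * q + 1) * (1 + a ^ 2 * b) / 2 * C, by positivity, fun n A hA k => ?_⟩
    obtain ⟨v, hv, -, hvk⟩ := exists_column ha hb A hA k
    have hn : (1 : ℝ) ≤ n := by exact_mod_cast (Fin.pos k)
    have hvk' : v k ≤ 1 + a ^ 2 * b := by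
      have : a ^ 2 * b / n ≤ a ^ 2 * b := div_le_self (by positivity) hn
      linarith [(abs_le.1 hvk).2]
    have hs := stein hA.1 hA.2.1 (tame_zero hA.2.1) le_rfl hv (2 * q)
    simp only [fderiv_fun_const, Pi.zero_apply, _root_.zero_apply, mul_zero, zero_mul,
      integral_zero, sub_zero] at hs
    have hM0 : 0 ≤ ∫ θ, θ k ^ (2 * q) * gibbs A (fun _ => 0) θ :=
      integral_nonneg fun θ => mul_nonneg (even_two_mul q |>.pow_nonneg _) (gibbs_nonneg _ _ _)
    have h1 : (2 * q + 1) * v k * (∫ θ, θ k ^ (2 * q) * gibbs A (fun _ => 0) θ) ≤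
        (2 * q + 1) * (1 + a ^ 2 * b) * (C * ∫ θ, gibbs A (fun _ => 0) θ) := by
      calc _ ≤ (2 * q + 1) * (1 + a ^ 2 * b) * (∫ θ, θ k ^ (2 * q) * gibbs A (fun _ => 0) θ) := by
            gcongr
        _ ≤ _ := by gcongr; exact h n A hA k
    push_cast at hs
    rw [show 2 * (q + 1) = 2 * q + 2 by ring]
    linarith

/-- Even moments for the full density.  The bound `H ≤ c₁ θᵀAθ / n` turns `e^F` into a Gaussian
rescaled by `s = 1 - c₁ / n`, which costs a factor `s^(-n/2) ≤ e^{c₁}`. -/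
theorem gibbs_moment {a b c₁ : ℝ} (c₂ : ℝ) (ha : 0 < a) (hb : 0 < b) (hc₁ : 0 < c₁) (q : ℕ) :
    ∃ C : ℝ, 0 ≤ C ∧ ∀ (n : ℕ) (A : Matrix (Fin n) (Fin n) ℝ), CondA a b A →
      2 * c₁ ≤ n → ∀ H : (Fin n → ℝ) → ℝ, CondH c₁ c₂ A H → ∀ k : Fin n,
      ∫ θ, θ k ^ (2 * q) * gibbs A H θ ≤ C * ∫ θ, gibbs A (fun _ => 0) θ := by
  obtain ⟨C, hC, hmom⟩ := gaussian_moment ha hb q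
  refine ⟨2 ^ q * Real.exp c₁ * C, by positivity, fun n A hA hn1 H hH k => ?_⟩
  have hn : (0 : ℝ) < n := by exact_mod_cast (Fin.pos k)
  have hx : c₁ / n ≤ 1 / 2 := by rw [div_le_iff₀ hn]; linarith
  have hx0 : 0 < c₁ / n := by positivity
  set s : ℝ := 1 - c₁ / n with hs
  have hs2 : 1 / 2 ≤ s := by linarith
  have hs0 : 0 < s := by linarith
  have hle : ∀ θ, gibbs A H θ ≤ gibbs A (fun _ => 0) (Real.sqrt s • θ) := by
    intro θ
    apply Real.exp_le_exp.2
    have h1 : (Real.sqrt s • θ) ⬝ᵥ A *ᵥ (Real.sqrt s • θ) = s * (θ ⬝ᵥ A *ᵥ θ) := by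
      rw [Matrix.mulVec_smul, smul_dotProduct, dotProduct_smul, smul_eq_mul, smul_eq_mul,
        ← mul_assoc, Real.mul_self_sqrt hs0.le]
    have h2 := hH.2.1 θ
    have h3 : c₁ * (θ ⬝ᵥ A *ᵥ θ) / n = c₁ / n * (θ ⬝ᵥ A *ᵥ θ) := by ring
    rw [h1, hs]; linarith
  have hpow : Real.exp (-c₁) ≤ Real.sqrt s ^ n := by
    have h1 : Real.exp (-(2 * (c₁ / n))) ≤ s := by
      rw [Real.exp_neg, inv_le_comm₀ (Real.exp_pos _) hs0, ← one_div, div_le_iff₀ hs0]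
      have := Real.add_one_le_exp (2 * (c₁ / n))
      nlinarith
    have h2 : Real.exp (-(c₁ / n)) ≤ Real.sqrt s := by
      apply Real.le_sqrt_of_sq_le
      rw [← Real.exp_nat_mul]
      convert h1 using 2; push_cast; ring
    calc Real.exp (-c₁) = Real.exp (-(c₁ / n)) ^ n := by
          rw [← Real.exp_nat_mul]; congr 1; field_simp
      _ ≤ _ := pow_le_pow_left₀ (Real.exp_pos _).le h2 n
  have hsq0 : 0 < Real.sqrt s := Real.sqrt_pos.2 hs0
  have hpt : ∀ θ : Fin n → ℝ, θ k ^ (2 * q) * gibbs A H θ ≤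
      (s ^ q)⁻¹ * ((Real.sqrt s • θ) k ^ (2 * q) * gibbs A (fun _ => 0) (Real.sqrt s • θ)) := by
    intro θ
    have h1 : (Real.sqrt s • θ) k ^ (2 * q) = s ^ q * θ k ^ (2 * q) := by
      rw [Pi.smul_apply, smul_eq_mul, mul_pow, pow_mul, Real.sq_sqrt hs0.le]
    rw [h1, ← mul_assoc, inv_mul_cancel_left₀ (by positivity)]
    exact mul_le_mul_of_nonneg_left (hle θ) (even_two_mul q |>.pow_nonneg _)
  have hIH := integrable_coord_pow hA.2.1 (hH.tame hA.2.1 (Fin.pos k) hn1) k (2 * q)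
  have hI0 := integrable_coord_pow hA.2.1 (tame_zero hA.2.1) k (2 * q)
  have hM0 : 0 ≤ ∫ θ, θ k ^ (2 * q) * gibbs A (fun _ => 0) θ :=
      integral_nonneg fun θ => mul_nonneg (even_two_mul q |>.pow_nonneg _) (gibbs_nonneg _ _ _)
  calc ∫ θ, θ k ^ (2 * q) * gibbs A H θ
      ≤ ∫ θ : Fin n → ℝ, (s ^ q)⁻¹ *
          ((Real.sqrt s • θ) k ^ (2 * q) * gibbs A (fun _ => 0) (Real.sqrt s • θ)) :=
        integral_mono hIH ((hI0.comp_smul hsq0.ne').const_mul _) hpt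
    _ = (s ^ q)⁻¹ * ((Real.sqrt s ^ n)⁻¹ * ∫ θ, θ k ^ (2 * q) * gibbs A (fun _ => 0) θ) := by
        rw [integral_const_mul, Measure.integral_comp_smul volume
          (fun θ : Fin n → ℝ => θ k ^ (2 * q) * gibbs A (fun _ => 0) θ), abs_of_pos (by positivity)]
        simp
    _ ≤ 2 ^ q * (Real.exp c₁ * (C * ∫ θ, gibbs A (fun _ => 0) θ)) := by
        gcongr
        · rw [← inv_pow]
          gcongr
          rw [inv_le_comm₀ hs0 two_pos]; linarith
        · rw [inv_le_comm₀ (by positivity) (Real.exp_pos _), ← Real.exp_neg]; exact hpow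
        · exact hmom n A hA k
    _ = _ := by ring

theorem norm_pow_le_sum {n : ℕ} (hn : 0 < n) (θ : Fin n → ℝ) (q : ℕ) :
    ‖θ‖ ^ (2 * q) ≤ ∑ j, θ j ^ (2 * q) := by
  have : Nonempty (Fin n) := ⟨⟨0, hn⟩⟩
  obtain ⟨j, hj⟩ := Finite.exists_max fun j => ‖θ j‖
  have h1 : ‖θ‖ ≤ ‖θ j‖ := (pi_norm_le_iff_of_nonneg (norm_nonneg _)).2 hj
  calc ‖θ‖ ^ (2 * q) ≤ ‖θ j‖ ^ (2 * q) := pow_le_pow_left₀ (norm_nonneg _) h1 _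
    _ = θ j ^ (2 * q) := by rw [pow_mul, Real.norm_eq_abs, sq_abs, ← pow_mul]
    _ ≤ _ := Finset.single_le_sum (f := fun j => θ j ^ (2 * q))
        (fun i _ => (even_two_mul q).pow_nonneg _) (Finset.mem_univ j)

/-- The factor `n` is the price of `‖θ‖^(2q) ≤ ∑ j, θ_j^(2q)`. -/
theorem gibbs_norm_moment {a b c₁ : ℝ} (c₂ : ℝ) (ha : 0 < a) (hb : 0 < b) (hc₁ : 0 < c₁) (q : ℕ) :
    ∃ C : ℝ, 0 ≤ C ∧ ∀ (n : ℕ) (A : Matrix (Fin n) (Fin n) ℝ), CondA a b A → 0 < n →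
      2 * c₁ ≤ n → ∀ H : (Fin n → ℝ) → ℝ, CondH c₁ c₂ A H →
      ∫ θ, ‖θ‖ ^ (2 * q) * gibbs A H θ ≤ C * n * ∫ θ, gibbs A (fun _ => 0) θ := by
  obtain ⟨C, hC, hmom⟩ := gibbs_moment c₂ ha hb hc₁ q
  refine ⟨C, hC, fun n A hA hn hn1 H hH => ?_⟩
  have hT := hH.tame hA.2.1 hn hn1
  calc ∫ θ, ‖θ‖ ^ (2 * q) * gibbs A H θ
      ≤ ∫ θ, ∑ j, θ j ^ (2 * q) * gibbs A H θ := by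
        refine integral_mono (integrable_norm_pow hA.2.1 hT _)
          (integrable_finsetSum _ fun j _ => integrable_coord_pow hA.2.1 hT j _) fun θ => ?_
        simp only
        rw [← Finset.sum_mul]
        exact mul_le_mul_of_nonneg_right (norm_pow_le_sum hn θ q) (gibbs_nonneg _ _ _)
    _ = ∑ j, ∫ θ, θ j ^ (2 * q) * gibbs A H θ :=
        integral_finsetSum _ fun j _ => integrable_coord_pow hA.2.1 hT j _
    _ ≤ ∑ _j : Fin n, C * ∫ θ, gibbs A (fun _ => 0) θ :=
        Finset.sum_le_sum fun j _ => hmom n A hA hn1 H hH j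
    _ = _ := by simp; ring

/-- Markov's inequality in moment form: the part of the density with `‖θ‖ > ρ n^ε` contributes
`O(1/n)`, since a moment of order `2 P ≥ 2 / ε` beats the factor `n` of the union bound. -/
theorem gibbs_tail {a b c₁ ε ρ : ℝ} (c₂ : ℝ) (ha : 0 < a) (hb : 0 < b) (hc₁ : 0 < c₁) (hε : 0 < ε)
    (hρ : 0 < ρ) (q : ℕ) :
    ∃ C : ℝ, 0 ≤ C ∧ ∀ (n : ℕ) (A : Matrix (Fin n) (Fin n) ℝ), CondA a b A → 0 < n →
      2 * c₁ ≤ n → ∀ H : (Fin n → ℝ) → ℝ, CondH c₁ c₂ A H →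
      ∀ S : Set (Fin n → ℝ), MeasurableSet S → (∀ θ ∈ S, ρ * (n : ℝ) ^ ε ≤ ‖θ‖) →
      ∫ θ in S, ‖θ‖ ^ (2 * q) * gibbs A H θ ≤ C / n * ∫ θ, gibbs A (fun _ => 0) θ := by
  obtain ⟨P, hP⟩ := exists_nat_ge (1 / ε)
  obtain ⟨C, hC, hmom⟩ := gibbs_norm_moment c₂ ha hb hc₁ (q + P)
  refine ⟨C / ρ ^ (2 * P), by positivity, fun n A hA hn hn1 H hH S hS hSρ => ?_⟩
  have hn' : (0 : ℝ) < n := by exact_mod_cast hn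
  have hn1' : (1 : ℝ) ≤ n := by exact_mod_cast hn
  have hT := hH.tame hA.2.1 hn hn1
  have hTpow : (n : ℝ) ^ 2 ≤ ((n : ℝ) ^ ε) ^ (2 * P) := by
    rw [← Real.rpow_natCast ((n : ℝ) ^ ε), ← Real.rpow_mul hn'.le, ← Real.rpow_natCast (n : ℝ)]
    apply Real.rpow_le_rpow_of_exponent_le hn1'
    have : 1 ≤ ε * P := by rwa [div_le_iff₀' hε] at hP
    push_cast; linarith
  have hR : 0 < ρ * (n : ℝ) ^ ε := by positivity
  set Z := ∫ θ, gibbs A (fun _ => 0) θ with hZ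
  have hZ0 : 0 ≤ Z := integral_nonneg fun θ => gibbs_nonneg _ _ _
  have hI := integrable_norm_pow hA.2.1 hT (2 * (q + P))
  calc ∫ θ in S, ‖θ‖ ^ (2 * q) * gibbs A H θ
      ≤ ∫ θ in S, ((ρ * (n : ℝ) ^ ε) ^ (2 * P))⁻¹ * (‖θ‖ ^ (2 * (q + P)) * gibbs A H θ) := by
        refine setIntegral_mono_on (integrable_norm_pow hA.2.1 hT _).integrableOn
          (hI.const_mul _).integrableOn hS fun θ hθ => ?_
        rw [← mul_assoc]
        refine mul_le_mul_of_nonneg_right ?_ (gibbs_nonneg _ _ _)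
        rw [← div_eq_inv_mul, le_div_iff₀ (by positivity), mul_add, pow_add]
        gcongr
        exact hSρ θ hθ
    _ ≤ ∫ θ, ((ρ * (n : ℝ) ^ ε) ^ (2 * P))⁻¹ * (‖θ‖ ^ (2 * (q + P)) * gibbs A H θ) := by
        refine setIntegral_le_integral (hI.const_mul _) (Filter.Eventually.of_forall fun θ => ?_)
        have := gibbs_nonneg A H θ
        simp only [Pi.zero_apply]; positivity
    _ = ((ρ * (n : ℝ) ^ ε) ^ (2 * P))⁻¹ * ∫ θ, ‖θ‖ ^ (2 * (q + P)) * gibbs A H θ :=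
        integral_const_mul _ _
    _ ≤ (ρ ^ (2 * P) * (n : ℝ) ^ 2)⁻¹ * (C * n * Z) := by
        rw [mul_pow]
        gcongr
        · exact integral_nonneg fun θ => mul_nonneg (by positivity) (gibbs_nonneg _ _ _)
        · exact hmom n A hA hn hn1 H hH
    _ = _ := by field_simp

/-- Splitting at `‖θ‖ = n^ε` replaces the factor `n` of `gibbs_norm_moment` by `n^(2qε)`, which is
better when `ε` is small. -/
theorem gibbs_norm_moment_rpow {a b c₁ ε : ℝ} (c₂ : ℝ) (ha : 0 < a) (hb : 0 < b) (hc₁ : 0 < c₁)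
    (hε : 0 < ε) (q : ℕ) :
    ∃ C : ℝ, 0 ≤ C ∧ ∀ (n : ℕ) (A : Matrix (Fin n) (Fin n) ℝ), CondA a b A → 0 < n →
      2 * c₁ ≤ n → ∀ H : (Fin n → ℝ) → ℝ, CondH c₁ c₂ A H →
      ∫ θ, ‖θ‖ ^ (2 * q) * gibbs A H θ ≤
        C * (n : ℝ) ^ (2 * q * ε) * ∫ θ, gibbs A (fun _ => 0) θ := by
  obtain ⟨C₀, hC₀, h0⟩ := gibbs_moment c₂ ha hb hc₁ 0
  obtain ⟨C₁, hC₁, h1⟩ := gibbs_tail c₂ ha hb hc₁ hε one_pos q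
  refine ⟨C₀ + C₁, by positivity, fun n A hA hn hn1 H hH => ?_⟩
  have hn' : (0 : ℝ) < n := by exact_mod_cast hn
  have hn1' : (1 : ℝ) ≤ n := by exact_mod_cast hn
  have hT := hH.tame hA.2.1 hn hn1
  set Z := ∫ θ, gibbs A (fun _ => 0) θ with hZ
  have hZ0 : 0 ≤ Z := integral_nonneg fun θ => gibbs_nonneg _ _ _
  have hI := integrable_norm_pow hA.2.1 hT (2 * q)
  set S : Set (Fin n → ℝ) := {θ | 1 * (n : ℝ) ^ ε ≤ ‖θ‖} with hS
  have hSm : MeasurableSet S := measurableSet_le measurable_const measurable_norm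
  have hpow : ((n : ℝ) ^ ε) ^ (2 * q) = (n : ℝ) ^ (2 * q * ε) := by
    rw [← Real.rpow_natCast ((n : ℝ) ^ ε), ← Real.rpow_mul hn'.le]
    congr 1; push_cast; ring
  have hone : 1 ≤ (n : ℝ) ^ (2 * q * ε) := Real.one_le_rpow hn1' (by positivity)
  have hin : ∫ θ in Sᶜ, ‖θ‖ ^ (2 * q) * gibbs A H θ ≤ (n : ℝ) ^ (2 * q * ε) * (C₀ * Z) := by
    calc ∫ θ in Sᶜ, ‖θ‖ ^ (2 * q) * gibbs A H θ
        ≤ ∫ θ in Sᶜ, (n : ℝ) ^ (2 * q * ε) * gibbs A H θ := by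
          refine setIntegral_mono_on hI.integrableOn
            ((integrable_gibbs hA.2.1 hT).const_mul _).integrableOn hSm.compl fun θ hθ => ?_
          refine mul_le_mul_of_nonneg_right ?_ (gibbs_nonneg _ _ _)
          rw [← hpow]
          have : ‖θ‖ < 1 * (n : ℝ) ^ ε := not_le.1 hθ
          exact pow_le_pow_left₀ (norm_nonneg _) (by linarith) _
      _ ≤ ∫ θ, (n : ℝ) ^ (2 * q * ε) * gibbs A H θ :=
          setIntegral_le_integral ((integrable_gibbs hA.2.1 hT).const_mul _)
            (Filter.Eventually.of_forall fun θ => mul_nonneg (by positivity) (gibbs_nonneg _ _ _))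
      _ = (n : ℝ) ^ (2 * q * ε) * ∫ θ, gibbs A H θ := integral_const_mul _ _
      _ ≤ _ := by
          have := h0 n A hA hn1 H hH ⟨0, hn⟩
          simp only [mul_zero, pow_zero, one_mul] at this
          gcongr
  have hout := h1 n A hA hn hn1 H hH S hSm fun θ hθ => hθ
  have hout' : C₁ / n * Z ≤ (n : ℝ) ^ (2 * q * ε) * (C₁ * Z) := by
    have : C₁ / n ≤ C₁ := div_le_self hC₁ hn1'
    calc C₁ / n * Z ≤ 1 * (C₁ * Z) := by rw [one_mul]; gcongr
      _ ≤ _ := by gcongr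
  rw [← integral_add_compl hSm hI]
  linarith

/-! ### Moment estimates on the whole space and on small dimensions -/

theorem abs_coord_le_norm {n : ℕ} (θ : Fin n → ℝ) (k : Fin n) : |θ k| ≤ ‖θ‖ := norm_le_pi_norm θ k

/-- Restriction to `Ω` changes an even moment by `O(1/n)`. -/
theorem moment_restrict {a b c₁ ε ρ : ℝ} (c₂ : ℝ) (ha : 0 < a) (hb : 0 < b) (hc₁ : 0 < c₁)
    (hε : 0 < ε) (hρ : 0 < ρ) (q : ℕ) :
    ∃ C : ℝ, 0 ≤ C ∧ ∀ (n : ℕ) (A : Matrix (Fin n) (Fin n) ℝ), CondA a b A →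
      2 * c₁ ≤ n → ∀ H : (Fin n → ℝ) → ℝ, CondH c₁ c₂ A H →
      ∀ Ω : Set (Fin n → ℝ), MeasurableSet Ω → Uset n (ρ * (n : ℝ) ^ ε) ⊆ Ω → ∀ k : Fin n,
      |(∫ θ in Ω, θ k ^ (2 * q) * gibbs A H θ) - ∫ θ, θ k ^ (2 * q) * gibbs A H θ| ≤
        C / n * ∫ θ, gibbs A (fun _ => 0) θ := by
  obtain ⟨C, hC, h⟩ := gibbs_tail c₂ ha hb hc₁ hε hρ q
  refine ⟨C, hC, fun n A hA hn1 H hH Ω hΩ hsub k => ?_⟩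
  have hn := Fin.pos k
  have hT := hH.tame hA.2.1 hn hn1
  have hI := integrable_coord_pow hA.2.1 hT k (2 * q)
  have h1 := integral_add_compl hΩ hI
  have h2 : 0 ≤ ∫ θ in Ωᶜ, θ k ^ (2 * q) * gibbs A H θ :=
    integral_nonneg fun θ => mul_nonneg ((even_two_mul q).pow_nonneg _) (gibbs_nonneg _ _ _)
  have h3 : ∫ θ in Ωᶜ, θ k ^ (2 * q) * gibbs A H θ ≤ ∫ θ in Ωᶜ, ‖θ‖ ^ (2 * q) * gibbs A H θ := by
    refine integral_mono hI.integrableOn (integrable_norm_pow hA.2.1 hT _).integrableOn fun θ => ?_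
    refine mul_le_mul_of_nonneg_right ?_ (gibbs_nonneg _ _ _)
    rw [← (even_two_mul q).pow_abs]
    exact pow_le_pow_left₀ (abs_nonneg _) (abs_coord_le_norm θ k) _
  have h4 := h n A hA hn hn1 H hH Ωᶜ hΩ.compl fun θ hθ => by
    have h5 : ¬ ∀ j, |θ j| ≤ ρ * (n : ℝ) ^ ε := fun h5 => hθ (hsub h5)
    push Not at h5
    obtain ⟨j, hj⟩ := h5
    exact hj.le.trans (abs_coord_le_norm θ j)
  rw [show (∫ θ in Ω, θ k ^ (2 * q) * gibbs A H θ) - ∫ θ, θ k ^ (2 * q) * gibbs A H θ =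
    -∫ θ in Ωᶜ, θ k ^ (2 * q) * gibbs A H θ by linarith, abs_neg, abs_of_nonneg h2]
  linarith

/-- The remainder in Stein's identity coming from `H`. -/
theorem stein_remainder {a b c₁ ε : ℝ} {c₂ : ℝ} (ha : 0 < a) (hb : 0 < b) (hc₁ : 0 < c₁)
    (hc₂ : 0 < c₂) (hε : 0 < ε) (q : ℕ) :
    ∃ C : ℝ, 0 ≤ C ∧ ∀ (n : ℕ) (A : Matrix (Fin n) (Fin n) ℝ), CondA a b A →
      2 * c₁ ≤ n → ∀ H : (Fin n → ℝ) → ℝ, CondH c₁ c₂ A H → ∀ (k : Fin n) (v : Fin n → ℝ),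
      ∑ j, |v j| ≤ 1 + a * b →
      |∫ θ, θ k ^ (2 * q + 1) * fderiv ℝ H θ v * gibbs A H θ| ≤
        C * (n : ℝ) ^ (-1 + (2 * q + 4) * ε) * ∫ θ, gibbs A (fun _ => 0) θ := by
  obtain ⟨C₁, hC₁, h1⟩ := gibbs_norm_moment_rpow c₂ ha hb hc₁ hε (q + 1)
  obtain ⟨C₂, hC₂, h2⟩ := gibbs_norm_moment_rpow c₂ ha hb hc₁ hε (q + 2)
  refine ⟨(1 + a * b) * c₂ * (C₁ + C₂), by positivity, fun n A hA hn1 H hH k v hv => ?_⟩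
  have hn := Fin.pos k
  have hn' : (0 : ℝ) < n := by exact_mod_cast hn
  have hn1' : (1 : ℝ) ≤ n := by exact_mod_cast hn
  have hT := hH.tame hA.2.1 hn hn1
  set Z := ∫ θ, gibbs A (fun _ => 0) θ with hZ
  have hZ0 : 0 ≤ Z := integral_nonneg fun θ => gibbs_nonneg _ _ _
  have hI1 := integrable_norm_pow hA.2.1 hT (2 * (q + 1))
  have hI2 := integrable_norm_pow hA.2.1 hT (2 * (q + 2))
  have hpt : ∀ θ, ‖θ k ^ (2 * q + 1) * fderiv ℝ H θ v * gibbs A H θ‖ ≤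
      (1 + a * b) * (c₂ / n) *
        (‖θ‖ ^ (2 * (q + 1)) * gibbs A H θ + ‖θ‖ ^ (2 * (q + 2)) * gibbs A H θ) := by
    intro θ
    rw [Real.norm_eq_abs, abs_mul, abs_of_nonneg (gibbs_nonneg A H θ), ← add_mul, ← mul_assoc]
    refine mul_le_mul_of_nonneg_right ?_ (gibbs_nonneg _ _ _)
    rw [abs_mul, abs_pow]
    calc |θ k| ^ (2 * q + 1) * |fderiv ℝ H θ v|
        ≤ ‖θ‖ ^ (2 * q + 1) * ((1 + a * b) * (c₂ / n * (‖θ‖ ^ 3 + ‖θ‖))) := by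
          gcongr
          · exact abs_coord_le_norm θ k
          · exact (abs_fderiv_le hT θ v).trans (by gcongr)
      _ = _ := by ring
  have hm1 := h1 n A hA hn hn1 H hH
  have hm2 := h2 n A hA hn hn1 H hH
  have hp : (n : ℝ) ^ (2 * ((q + 1 : ℕ) : ℝ) * ε) ≤ (n : ℝ) ^ ((2 * q + 4) * ε) := by
    apply Real.rpow_le_rpow_of_exponent_le hn1'
    push_cast; nlinarith
  have hp2 : (n : ℝ) ^ (2 * ((q + 2 : ℕ) : ℝ) * ε) = (n : ℝ) ^ ((2 * q + 4) * ε) := by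
    congr 1; push_cast; ring
  rw [hp2] at hm2
  have hm1' : ∫ θ, ‖θ‖ ^ (2 * (q + 1)) * gibbs A H θ ≤ C₁ * (n : ℝ) ^ ((2 * q + 4) * ε) * Z :=
    hm1.trans (by gcongr)
  calc |∫ θ, θ k ^ (2 * q + 1) * fderiv ℝ H θ v * gibbs A H θ|
      ≤ ∫ θ, (1 + a * b) * (c₂ / n) *
        (‖θ‖ ^ (2 * (q + 1)) * gibbs A H θ + ‖θ‖ ^ (2 * (q + 2)) * gibbs A H θ) :=
        norm_integral_le_of_norm_le ((hI1.add hI2).const_mul _) (Filter.Eventually.of_forall hpt)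
    _ = (1 + a * b) * (c₂ / n) * ((∫ θ, ‖θ‖ ^ (2 * (q + 1)) * gibbs A H θ) +
          ∫ θ, ‖θ‖ ^ (2 * (q + 2)) * gibbs A H θ) := by
        rw [integral_const_mul, integral_add hI1 hI2]
    _ ≤ (1 + a * b) * (c₂ / n) * (C₁ * (n : ℝ) ^ ((2 * q + 4) * ε) * Z +
          C₂ * (n : ℝ) ^ ((2 * q + 4) * ε) * Z) := by gcongr
    _ = _ := by
        rw [Real.rpow_add hn', Real.rpow_neg_one]
        ring

/-- The estimates for the integrals over all of `ℝⁿ`, where integration by parts has no boundary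
terms. -/
theorem moments_full {a b c₁ ε : ℝ} {c₂ : ℝ} (ha : 0 < a) (hb : 0 < b) (hc₁ : 0 < c₁)
    (hc₂ : 0 < c₂) (hε : 0 < ε) :
    ∃ C : ℝ, 0 ≤ C ∧ ∀ (n : ℕ) (A : Matrix (Fin n) (Fin n) ℝ), CondA a b A →
      2 * c₁ ≤ n → ∀ H : (Fin n → ℝ) → ℝ, CondH c₁ c₂ A H → ∀ k : Fin n,
      |(∫ θ, θ k ^ 2 * gibbs A H θ) - 1 / 2 * ∫ θ, gibbs A H θ| ≤
        C * (n : ℝ) ^ (-1 + 4 * ε) * (∫ θ, gibbs A (fun _ => 0) θ) ∧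
      |(∫ θ, θ k ^ 4 * gibbs A H θ) - 3 / 4 * ∫ θ, gibbs A H θ| ≤
        C * (n : ℝ) ^ (-1 + 7 * ε) * (∫ θ, gibbs A (fun _ => 0) θ) := by
  obtain ⟨K₀, hK₀, hm0⟩ := gibbs_moment c₂ ha hb hc₁ 0
  obtain ⟨K₁, hK₁, hm1⟩ := gibbs_moment c₂ ha hb hc₁ 1
  obtain ⟨R₀, hR₀, hr0⟩ := stein_remainder ha hb hc₁ hc₂ hε 0
  obtain ⟨R₁, hR₁, hr1⟩ := stein_remainder ha hb hc₁ hc₂ hε 1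
  refine ⟨2 * (a ^ 2 * b * (K₀ + K₁) + R₀ + R₁), by positivity, fun n A hA hn1 H hH k => ?_⟩
  have hn := Fin.pos k
  have hn' : (0 : ℝ) < n := by exact_mod_cast hn
  have hn1' : (1 : ℝ) ≤ n := by exact_mod_cast hn
  have hT := hH.tame hA.2.1 hn hn1
  obtain ⟨v, hv, hv1, hvk⟩ := exists_column ha hb A hA k
  have s0 := stein hA.1 hA.2.1 hT (by positivity) hv 0
  have s1 := stein hA.1 hA.2.1 hT (by positivity) hv 2
  have r0 := hr0 n A hA hn1 H hH k v hv1
  have r1 := hr1 n A hA hn1 H hH k v hv1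
  have m0 := hm0 n A hA hn1 H hH k
  have m1 := hm1 n A hA hn1 H hH k
  norm_num at s0 s1 r0 r1 m0 m1
  set Z := ∫ θ, gibbs A (fun _ => 0) θ with hZ
  have hZ0 : 0 ≤ Z := integral_nonneg fun θ => gibbs_nonneg _ _ _
  set I0 := ∫ θ, gibbs A H θ with hI0
  set I2 := ∫ θ, θ k ^ 2 * gibbs A H θ with hI2
  set I4 := ∫ θ, θ k ^ 4 * gibbs A H θ with hI4
  set E0 := ∫ θ, θ k * fderiv ℝ H θ v * gibbs A H θ with hE0
  set E1 := ∫ θ, θ k ^ 3 * fderiv ℝ H θ v * gibbs A H θ with hE1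
  have hI0p : 0 ≤ I0 := integral_nonneg fun θ => gibbs_nonneg _ _ _
  have hI2p : 0 ≤ I2 := integral_nonneg fun θ => mul_nonneg (sq_nonneg _) (gibbs_nonneg _ _ _)
  set p4 := (n : ℝ) ^ (-1 + 4 * ε) with hp4
  set p7 := (n : ℝ) ^ (-1 + 7 * ε) with hp7
  have hp4n : (n : ℝ)⁻¹ ≤ p4 := by
    rw [← Real.rpow_neg_one]
    exact Real.rpow_le_rpow_of_exponent_le hn1' (by linarith)
  have hp47 : p4 ≤ p7 := Real.rpow_le_rpow_of_exponent_le hn1' (by linarith)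
  have hp67 : (n : ℝ) ^ (-1 + 6 * ε) ≤ p7 :=
    Real.rpow_le_rpow_of_exponent_le hn1' (by linarith)
  have hp0 : 0 ≤ p4 := by positivity
  have hd : |v k - 1| ≤ a ^ 2 * b * p4 := hvk.trans (by rw [div_eq_mul_inv]; gcongr)
  have hd0 : |(v k - 1) * I0| ≤ a ^ 2 * b * p4 * (K₀ * Z) := by
    rw [abs_mul, abs_of_nonneg hI0p]; gcongr
  have hd2 : |(v k - 1) * I2| ≤ a ^ 2 * b * p4 * (K₁ * Z) := by
    rw [abs_mul, abs_of_nonneg hI2p]; gcongr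
  -- both are Stein's identity, with `v_k` split as `1 + (v_k - 1)`
  have e2 : I2 - 1 / 2 * I0 = ((v k - 1) * I0 + E0) / 2 := by linarith
  have e4 : I4 - 3 / 4 * I0 = 3 / 2 * ((v k - 1) * I2) + 3 / 2 * (I2 - 1 / 2 * I0) + E1 / 2 := by
    linarith
  have b2 : |I2 - 1 / 2 * I0| ≤ (a ^ 2 * b * K₀ + R₀) * p4 * Z / 2 := by
    rw [e2, abs_div, abs_two]
    have := abs_add_le ((v k - 1) * I0) E0
    have : |(v k - 1) * I0 + E0| ≤ (a ^ 2 * b * K₀ + R₀) * p4 * Z := by linarith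
    linarith
  have hab : 0 ≤ a ^ 2 * b := by positivity
  refine ⟨b2.trans ?_, ?_⟩
  · have h : 0 ≤ (a ^ 2 * b * (3 * K₀ + 4 * K₁) + 3 * R₀ + 4 * R₁) * p4 * Z := by positivity
    linarith
  · have r1' : |E1| ≤ R₁ * p7 * Z := r1.trans (by gcongr)
    have t1 := abs_add_le (3 / 2 * ((v k - 1) * I2) + 3 / 2 * (I2 - 1 / 2 * I0)) (E1 / 2)
    have t2 := abs_add_le (3 / 2 * ((v k - 1) * I2)) (3 / 2 * (I2 - 1 / 2 * I0))
    rw [← e4] at t1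
    rw [abs_mul (3 / 2), abs_mul (3 / 2), abs_of_pos (by norm_num : (0 : ℝ) < 3 / 2)] at t2
    rw [abs_div, abs_two] at t1
    have t3 : |I4 - 3 / 4 * I0| ≤
        (3 / 2 * (a ^ 2 * b * K₁) + 3 / 4 * (a ^ 2 * b * K₀ + R₀)) * p4 * Z + R₁ / 2 * p7 * Z := by
      linarith
    refine t3.trans ?_
    have t4 : (3 / 2 * (a ^ 2 * b * K₁) + 3 / 4 * (a ^ 2 * b * K₀ + R₀)) * p4 * Z ≤
        (3 / 2 * (a ^ 2 * b * K₁) + 3 / 4 * (a ^ 2 * b * K₀ + R₀)) * p7 * Z := by gcongr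
    have hp7' : 0 ≤ p7 := hp0.trans hp47
    have t5 : 0 ≤ (a ^ 2 * b * (5 / 4 * K₀ + K₁ / 2) + 5 / 4 * R₀ + 3 / 2 * R₁) * p7 * Z := by
      positivity
    linarith

/-- For `n` below a fixed threshold everything in sight is bounded on `Ω`, so no decay estimate
is needed. -/
theorem moments_small {a b c₁ ε r₂ : ℝ} (c₂ : ℝ) (ha : 0 < a) (hc₁ : 0 < c₁) (hε : 0 < ε)
    (hr₂ : 0 < r₂) (q : ℕ) {w : ℝ} (hw : 0 ≤ w) :
    ∃ C : ℝ, 0 ≤ C ∧ ∀ (n : ℕ) (A : Matrix (Fin n) (Fin n) ℝ), CondA a b A →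
      (n : ℝ) ≤ 2 * c₁ → ∀ H : (Fin n → ℝ) → ℝ, CondH c₁ c₂ A H →
      ∀ Ω : Set (Fin n → ℝ), MeasurableSet Ω → Ω ⊆ Uset n (r₂ * (n : ℝ) ^ ε) → ∀ k : Fin n,
      |(∫ θ in Ω, θ k ^ (2 * q) * gibbs A H θ) - w * ∫ θ in Ω, gibbs A H θ| ≤
        C / n * ∫ θ, gibbs A (fun _ => 0) θ := by
  set N := 2 * c₁ with hN
  set R := r₂ * N ^ ε with hR
  have hN0 : 0 < N := by positivity
  have hR0 : 0 < R := by positivity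
  set B := Real.exp (c₁ * (N * ((1 + a) * R ^ 2))) with hB
  refine ⟨(R ^ (2 * q) + w) * B * N, by positivity, fun n A hA hnN H hH Ω hΩ hsub k => ?_⟩
  have hn := Fin.pos k
  have hn' : (0 : ℝ) < n := by exact_mod_cast hn
  have hn1' : (1 : ℝ) ≤ n := by exact_mod_cast hn
  have hθR : ∀ θ ∈ Ω, ∀ j, |θ j| ≤ R := fun θ hθ j => (hsub hθ j).trans (by rw [hR]; gcongr)
  have hAij : ∀ i j, |A i j| ≤ 1 + a := by
    intro i j
    by_cases hij : i = j
    · subst hij; rw [hA.2.2.1]; simp; linarith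
    · have : a / n ≤ a := div_le_self ha.le hn1'
      linarith [hA.2.2.2.1 i j hij]
  have hquad : ∀ θ ∈ Ω, θ ⬝ᵥ A.mulVec θ ≤ n * (n * ((1 + a) * R ^ 2)) := by
    intro θ hθ
    simp only [dotProduct, Matrix.mulVec, Finset.mul_sum]
    calc ∑ i, ∑ j, θ i * (A i j * θ j) ≤ ∑ _i : Fin n, ∑ _j : Fin n, (1 + a) * R ^ 2 := by
          refine Finset.sum_le_sum fun i _ => Finset.sum_le_sum fun j _ => ?_
          refine (le_abs_self _).trans ?_
          rw [abs_mul, abs_mul]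
          calc |θ i| * (|A i j| * |θ j|) ≤ R * ((1 + a) * R) := by
                gcongr
                · exact hθR θ hθ i
                · exact hAij i j
                · exact hθR θ hθ j
            _ = _ := by ring
      _ = _ := by simp
  have hHB : ∀ θ ∈ Ω, gibbs A H θ ≤ B * gibbs A (fun _ => 0) θ := by
    intro θ hθ
    unfold gibbs
    rw [hB, ← Real.exp_add]
    apply Real.exp_le_exp.2
    have h1 := hH.2.1 θ
    have h2 : c₁ * (θ ⬝ᵥ A.mulVec θ) / n ≤ c₁ * (N * ((1 + a) * R ^ 2)) := by
      rw [div_le_iff₀ hn']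
      calc c₁ * (θ ⬝ᵥ A.mulVec θ) ≤ c₁ * (n * (n * ((1 + a) * R ^ 2))) := by
            gcongr; exact hquad θ hθ
        _ ≤ c₁ * (n * (N * ((1 + a) * R ^ 2))) := by gcongr
        _ = _ := by ring
    linarith
  set Z := ∫ θ, gibbs A (fun _ => 0) θ with hZ
  have hZ0 : 0 ≤ Z := integral_nonneg fun θ => gibbs_nonneg _ _ _
  have hIZ := integrable_gibbs hA.2.1 (tame_zero hA.2.1)
  have key : ∀ m : ℕ, 0 ≤ (∫ θ in Ω, θ k ^ (2 * m) * gibbs A H θ) ∧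
      (∫ θ in Ω, θ k ^ (2 * m) * gibbs A H θ) ≤ R ^ (2 * m) * B * Z := by
    intro m
    refine ⟨integral_nonneg fun θ => mul_nonneg ((even_two_mul m).pow_nonneg _)
      (gibbs_nonneg _ _ _), ?_⟩
    calc (∫ θ in Ω, θ k ^ (2 * m) * gibbs A H θ)
        ≤ ∫ θ in Ω, R ^ (2 * m) * B * gibbs A (fun _ => 0) θ := by
          refine integral_mono_of_nonneg (Filter.Eventually.of_forall fun θ => mul_nonneg
            ((even_two_mul m).pow_nonneg _) (gibbs_nonneg _ _ _))
            (hIZ.const_mul _).integrableOn ((ae_restrict_iff' hΩ).2 (ae_of_all _ fun θ hθ => ?_))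
          simp only
          rw [mul_assoc, ← (even_two_mul m).pow_abs]
          have := gibbs_nonneg A H θ
          gcongr
          · exact hθR θ hθ k
          · exact hHB θ hθ
      _ ≤ ∫ θ, R ^ (2 * m) * B * gibbs A (fun _ => 0) θ :=
          setIntegral_le_integral (hIZ.const_mul _)
            (Filter.Eventually.of_forall fun θ => mul_nonneg (by positivity) (gibbs_nonneg _ _ _))
      _ = _ := integral_const_mul _ _
  obtain ⟨l0, u0⟩ := key 0
  obtain ⟨lq, uq⟩ := key q
  simp only [mul_zero, pow_zero, one_mul] at l0 u0
  have h1 : (R ^ (2 * q) + w) * B * Z ≤ (R ^ (2 * q) + w) * B * N / n * Z := by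
    gcongr
    rw [le_div_iff₀ hn']
    gcongr
  have h2 : 0 ≤ R ^ (2 * q) * B * Z := by positivity
  have h3 : 0 ≤ w * (B * Z) := by positivity
  have h4 := mul_le_mul_of_nonneg_left u0 hw
  have h5 := mul_nonneg hw l0
  refine le_trans ?_ h1
  rw [abs_le]
  constructor <;> linarith

/-- Lemma 4.2, (4.21)–(4.22): second and fourth moments of a single coordinate. -/
theorem integral_moment_estimates (a b ε r₁ r₂ c₁ c₂ : ℝ) (ha : 0 < a) (hb : 0 < b)
    (hε : 0 < ε) (hr₁ : 0 < r₁) (hr₁₂ : r₁ < r₂) (hc₁ : 0 < c₁) (hc₂ : 0 < c₂) :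
    ∃ c : ℝ, 0 < c ∧
      ∀ (n : ℕ) (A : Matrix (Fin n) (Fin n) ℝ), CondA a b A →
      ∀ H : (Fin n → ℝ) → ℝ, CondH c₁ c₂ A H →
      ∀ Ω : Set (Fin n → ℝ), MeasurableSet Ω →
        Uset n (r₁ * (n : ℝ) ^ (ε : ℝ)) ⊆ Ω → Ω ⊆ Uset n (r₂ * (n : ℝ) ^ (ε : ℝ)) →
        ∀ k : Fin n,
        (|(∫ θ in Ω, θ k ^ 2 * Real.exp (-(θ ⬝ᵥ A.mulVec θ) + H θ)) -
            (1 / 2) * ∫ θ in Ω, Real.exp (-(θ ⬝ᵥ A.mulVec θ) + H θ)| ≤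
          c * (n : ℝ) ^ (-1 + 4 * ε) * ∫ θ : Fin n → ℝ, Real.exp (-(θ ⬝ᵥ A.mulVec θ))) ∧
        (|(∫ θ in Ω, θ k ^ 4 * Real.exp (-(θ ⬝ᵥ A.mulVec θ) + H θ)) -
            (3 / 4) * ∫ θ in Ω, Real.exp (-(θ ⬝ᵥ A.mulVec θ) + H θ)| ≤
          c * (n : ℝ) ^ (-1 + 7 * ε) * ∫ θ : Fin n → ℝ, Real.exp (-(θ ⬝ᵥ A.mulVec θ))) := by
  obtain ⟨F, hF, hfull⟩ := moments_full ha hb hc₁ hc₂ hε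
  obtain ⟨T₀, hT₀, ht0⟩ := moment_restrict c₂ ha hb hc₁ hε hr₁ 0
  obtain ⟨T₁, hT₁, ht1⟩ := moment_restrict c₂ ha hb hc₁ hε hr₁ 1
  obtain ⟨T₂, hT₂, ht2⟩ := moment_restrict c₂ ha hb hc₁ hε hr₁ 2
  obtain ⟨S₁, hS₁, hs1⟩ := moments_small (b := b) c₂ ha hc₁ hε (hr₁.trans hr₁₂) 1
    (w := 1 / 2) (by norm_num)
  obtain ⟨S₂, hS₂, hs2⟩ := moments_small (b := b) c₂ ha hc₁ hε (hr₁.trans hr₁₂) 2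
    (w := 3 / 4) (by norm_num)
  refine ⟨F + T₀ + T₁ + T₂ + S₁ + S₂ + 1, by positivity, ?_⟩
  intro n A hA H hH Ω hΩ hsub hsup k
  have hn := Fin.pos k
  have hn' : (0 : ℝ) < n := by exact_mod_cast hn
  have hn1' : (1 : ℝ) ≤ n := by exact_mod_cast hn
  have hZe : ∫ θ : Fin n → ℝ, Real.exp (-(θ ⬝ᵥ A.mulVec θ)) = ∫ θ, gibbs A (fun _ => 0) θ := by
    simp [gibbs]
  rw [hZe]
  change |(∫ θ in Ω, θ k ^ 2 * gibbs A H θ) - (1 / 2) * ∫ θ in Ω, gibbs A H θ| ≤ _ ∧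
    |(∫ θ in Ω, θ k ^ 4 * gibbs A H θ) - (3 / 4) * ∫ θ in Ω, gibbs A H θ| ≤ _
  set Z := ∫ θ, gibbs A (fun _ => 0) θ with hZ
  have hZ0 : 0 ≤ Z := integral_nonneg fun θ => gibbs_nonneg _ _ _
  set p4 := (n : ℝ) ^ (-1 + 4 * ε) with hp4
  set p7 := (n : ℝ) ^ (-1 + 7 * ε) with hp7
  have hle : ∀ e : ℝ, 0 ≤ e → (n : ℝ)⁻¹ ≤ (n : ℝ) ^ (-1 + e) := fun e he => by
    rw [← Real.rpow_neg_one]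
    exact Real.rpow_le_rpow_of_exponent_le hn1' (by linarith)
  have hp4n : (n : ℝ)⁻¹ ≤ p4 := hle _ (by positivity)
  have hp7n : (n : ℝ)⁻¹ ≤ p7 := hle _ (by positivity)
  have hp40 : 0 ≤ p4 := by positivity
  have hp70 : 0 ≤ p7 := by positivity
  have hconv : ∀ {C p : ℝ}, 0 ≤ C → (n : ℝ)⁻¹ ≤ p → C / n * Z ≤ C * p * Z := by
    intro C p hC hp
    rw [div_eq_mul_inv]; gcongr
  rcases le_total (2 * c₁) n with hbig | hsmall
  · obtain ⟨f2, f4⟩ := hfull n A hA hbig H hH k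
    have t0 := ht0 n A hA hbig H hH Ω hΩ hsub k
    have t1 := ht1 n A hA hbig H hH Ω hΩ hsub k
    have t2 := ht2 n A hA hbig H hH Ω hΩ hsub k
    norm_num only [mul_zero, pow_zero, one_mul, mul_one] at t0 t1 t2
    constructor
    · have g0 := abs_le.1 (t0.trans (hconv hT₀ hp4n))
      have g1 := abs_le.1 (t1.trans (hconv hT₁ hp4n))
      have gf := abs_le.1 f2
      have z : 0 ≤ (T₀ / 2 + T₂ + S₁ + S₂ + 1) * p4 * Z := by positivity
      rw [abs_le]
      constructor <;> linarith [g0.1, g0.2, g1.1, g1.2, gf.1, gf.2]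
    · have g0 := abs_le.1 (t0.trans (hconv hT₀ hp7n))
      have g2 := abs_le.1 (t2.trans (hconv hT₂ hp7n))
      have gf := abs_le.1 f4
      have z : 0 ≤ (T₀ / 4 + T₁ + S₁ + S₂ + 1) * p7 * Z := by positivity
      rw [abs_le]
      constructor <;> linarith [g0.1, g0.2, g2.1, g2.2, gf.1, gf.2]
  · constructor
    · refine (hs1 n A hA hsmall H hH Ω hΩ hsup k).trans ((hconv hS₁ hp4n).trans ?_)
      gcongr; linarith
    · refine (hs2 n A hA hsmall H hH Ω hΩ hsup k).trans ((hconv hS₂ hp7n).trans ?_)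
      gcongr; linarith
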